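/- Fix integers k, m ≥ 1. Then C(x) > x for every real x < 0, and C(x) < x for every real x > 1. -/

import Mathlib

/-!
The displacement `C x - x` is `-x (x - 1) E x / (2 ((a + b) x - a)³)`. To the left of both roots
the product `x (x - 1)` is positive, every term of the quadratic `E` is nonnegative and the cube is
negative, so `C` moves points to the right. The reflection `x ↦ 1 - x` exchanges the two roots and
conjugates `C` to the Chebyshev map with the multiplicities exchanged, so to the right of both
roots `C` moves points to the left.
-/

section ChebyshevMap

variable {K : Type*} [Field K]

/-- The quadratic factor `E` of the Chebyshev map of `p = z ^ a * (z - 1) ^ b`: with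
`D = (a + b) x - a`, so that `p' / p = D / (x (x - 1))`, it is `D² (2 + p p'' / p'²)`. -/
def chebyshevQuadratic (a b x : K) : K :=
  (a + b) * (3 * a + 3 * b - 1) * x ^ 2 - 2 * a * (3 * a + 3 * b - 1) * x + (3 * a ^ 2 - a)

/-- Chebyshev's method `x - (p / p') (1 + p p'' / (2 p'²))` for `p = z ^ a * (z - 1) ^ b`, as a
rational function of `x` in which the multiplicities `a` and `b` may be any scalars. At the
critical point `a / (a + b)` division by zero gives it the junk value `x`. -/
def chebyshevMap (a b x : K) : K :=
  x - x * (x - 1) * chebyshevQuadratic a b x / (2 * ((a + b) * x - a) ^ 3)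

lemma chebyshevQuadratic_one_sub (a b x : K) :
    chebyshevQuadratic b a (1 - x) = chebyshevQuadratic a b x := by
  unfold chebyshevQuadratic
  ring

lemma chebyshevMap_one_sub (a b x : K) :
    chebyshevMap b a (1 - x) = 1 - chebyshevMap a b x := by
  have denominator_neg : 2 * ((b + a) * (1 - x) - b) ^ 3 = -(2 * ((a + b) * x - a) ^ 3) := by ring
  rw [chebyshevMap, chebyshevMap, chebyshevQuadratic_one_sub, denominator_neg, div_neg]
  ring

variable [LinearOrder K] [IsStrictOrderedRing K] {a b x : K}

lemma chebyshevQuadratic_pos_of_neg (ha : 1 / 3 ≤ a) (hab : 1 / 3 < a + b) (hx : x < 0) :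
    0 < chebyshevQuadratic a b x := by
  have ha₀ : 0 < a := by linarith
  have hab₀ : 0 < a + b := by linarith
  have hs : 0 < 3 * a + 3 * b - 1 := by linarith
  have quadratic_term : 0 < (a + b) * (3 * a + 3 * b - 1) * x ^ 2 :=
    mul_pos (mul_pos hab₀ hs) (sq_pos_of_neg hx)
  have linear_term : 2 * a * (3 * a + 3 * b - 1) * x < 0 :=
    mul_neg_of_pos_of_neg (by positivity) hx
  have constant_term : 0 ≤ a * (3 * a - 1) := mul_nonneg ha₀.le (by linarith)
  unfold chebyshevQuadratic
  linarith

lemma lt_chebyshevMap_of_neg (ha : 1 / 3 ≤ a) (hab : 1 / 3 < a + b) (hx : x < 0) :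
    x < chebyshevMap a b x := by
  have numerator_pos : 0 < x * (x - 1) * chebyshevQuadratic a b x :=
    mul_pos (mul_pos_of_neg_of_neg hx (by linarith)) (chebyshevQuadratic_pos_of_neg ha hab hx)
  have base_neg : (a + b) * x - a < 0 := by
    have : (a + b) * x < 0 := mul_neg_of_pos_of_neg (by linarith) hx
    linarith
  have denominator_neg : 2 * ((a + b) * x - a) ^ 3 < 0 :=
    mul_neg_of_pos_of_neg two_pos (Odd.pow_neg (by decide) base_neg)
  have displacement := div_neg_of_pos_of_neg numerator_pos denominator_neg
  unfold chebyshevMap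
  linarith

lemma chebyshevMap_lt_of_one_lt (hb : 1 / 3 ≤ b) (hab : 1 / 3 < a + b) (hx : 1 < x) :
    chebyshevMap a b x < x := by
  have reflected : 1 - x < chebyshevMap b a (1 - x) :=
    lt_chebyshevMap_of_neg hb (by rwa [add_comm]) (sub_neg.mpr hx)
  rw [chebyshevMap_one_sub] at reflected
  exact (sub_lt_sub_iff_left 1).mp reflected

theorem chebyshev_displacement_outside_general (ha : 1 / 3 ≤ a) (hb : 1 / 3 ≤ b) (C : K → K)
    (hC : ∀ x, x ≠ a / (a + b) → C x = chebyshevMap a b x) :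
    (∀ x, x < 0 → x < C x) ∧ (∀ x, 1 < x → C x < x) := by
  have ha₀ : 0 < a := by linarith
  have hb₀ : 0 < b := by linarith
  have hab : 1 / 3 < a + b := by linarith
  refine ⟨fun x hx => ?_, fun x hx => ?_⟩
  · have critical_pos : 0 < a / (a + b) := by positivity
    rw [hC x (hx.trans critical_pos).ne]
    exact lt_chebyshevMap_of_neg ha hab hx
  · have critical_lt_one : a / (a + b) < 1 :=
      (div_lt_one (add_pos ha₀ hb₀)).mpr (lt_add_of_pos_right a hb₀)
    rw [hC x (critical_lt_one.trans hx).ne']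
    exact chebyshevMap_lt_of_one_lt hb hab hx

end ChebyshevMap

/-- For `k, m ≥ 1`, the Chebyshev map `C` for `z^k(z-1)^m` satisfies `C(x) > x` for every
real `x < 0` and `C(x) < x` for every real `x > 1`. -/
theorem chebyshev_displacement_outside (k m : ℕ) (hk : 1 ≤ k) (hm : 1 ≤ m)
    (C : ℝ → ℝ)
    (hC : ∀ x : ℝ, x ≠ (k : ℝ) / ((k : ℝ) + m) →
      C x = x - x * (x - 1) *
        (((k : ℝ) + m) * (3 * k + 3 * m - 1) * x ^ 2 - 2 * k * (3 * k + 3 * m - 1) * x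
          + (3 * (k : ℝ) ^ 2 - k)) / (2 * (((k : ℝ) + m) * x - k) ^ 3)) :
    (∀ x : ℝ, x < 0 → x < C x) ∧ (∀ x : ℝ, 1 < x → C x < x) := by
  have one_third_le_cast {n : ℕ} (hn : 1 ≤ n) : (1 / 3 : ℝ) ≤ n := by
    linarith [Nat.one_le_cast (α := ℝ).mpr hn]
  exact chebyshev_displacement_outside_general (one_third_le_cast hk) (one_third_le_cast hm) C hC
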